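/- arXiv:2106.11552 — 4 statements merged into one kernel-verified Lean document; each statement's English description precedes it below -/
import Mathlib

section
/- Let m ≥ 1 and let H be a subgroup of the free group F_m. The language L_H of reduced words over Σ representing elements of H is a regular language (accepted by some deterministic finite automaton with finitely many states) if and only if H is finitely generated. -/
/-- The language of reduced words over `Σ = A ∪ A⁻¹` (letters encoded as `Fin m × Bool`)
that represent elements of the subgroup `H` of the free group `F_m`. -/
def LH (m : ℕ) (H : Subgroup (FreeGroup (Fin m))) : Language (Fin m × Bool) :=
  {w | FreeGroup.reduce w = w ∧ FreeGroup.mk w ∈ H}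

/-!
By Myhill–Nerode, the reduced words of `H` form a regular language iff they have finitely many left
quotients. A word `u` that extends to a reduced word of `H` is a path in the Stallings core graph
of `H`, and its left quotient is determined by the coset `H u` together with the last letter of
`u`. Conversely, the quotient determines both: if `u` and `v` had the same quotient but different
last letters, then `u v⁻¹` would be a reduced word of `H`, hence so would be `v v⁻¹`, which forces
`v` and, by symmetry, `u` to be empty. So the language is regular iff the core graph is finite. A
finite core graph yields finitely many Schreier generators, and if `H` is finitely generated, the
core graph lies in the union of the finitely many loops read by the generators, because reducing a
word only removes vertices from its path.
-/

open FreeGroup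
open scoped Pointwise

section Group

variable {G : Type*} [Group G] {H : Subgroup G} {A D : Set G}

/-- The generators of `H` in Schreier's lemma, for letters `A` and coset representatives `D`; here
`D` may hold several representatives of a coset, or none. -/
def schreierGenerators (H : Subgroup G) (A D : Set G) : Set G :=
  H ∩ (D * A * D⁻¹)

theorem prod_mem_closure_schreierGenerators_mul (hD : 1 ∈ D) (l : List G)
    (hA : ∀ a ∈ l, a ∈ A) (hl : ∀ p, p <+: l → p.prod ∈ (H : Set G) * D) :
    l.prod ∈ (Subgroup.closure (schreierGenerators H A D) : Set G) * D := by
  induction l using List.reverseRecOn with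
  | nil => exact ⟨1, one_mem _, 1, hD, one_mul 1⟩
  | append_singleton l a ih =>
    obtain ⟨t, ht, d, hd, htd : t * d = l.prod⟩ :=
      ih (fun b hb => hA b (List.mem_append_left _ hb))
        fun p hp => hl p (hp.trans (List.prefix_append _ _))
    obtain ⟨h, hh, e, he, hhe : h * e = (l ++ [a]).prod⟩ := hl _ List.prefix_rfl
    have hprod : t * d * a = h * e := by rw [htd, hhe, List.prod_append, List.prod_singleton]
    have htH : t ∈ H :=
      (Subgroup.closure_le H).2 Set.inter_subset_left ht
    have hgen : d * a * e⁻¹ ∈ schreierGenerators H A D := by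
      refine ⟨?_, Set.mul_mem_mul (Set.mul_mem_mul hd (hA a (by simp))) (Set.inv_mem_inv.2 he)⟩
      have : d * a * e⁻¹ = t⁻¹ * h := by
        rw [eq_inv_mul_iff_mul_eq, ← mul_assoc, ← mul_assoc, hprod, mul_inv_cancel_right]
      exact this ▸ H.mul_mem (H.inv_mem htH) hh
    refine ⟨t * (d * a * e⁻¹), mul_mem ht (Subgroup.subset_closure hgen), e, he, ?_⟩
    change t * (d * a * e⁻¹) * e = _
    rw [← hhe, ← hprod]
    group

theorem fg_of_forall_prefix_prod_mem_mul (hA : A.Finite) (hD : D.Finite)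
    (h : ∀ g ∈ H, ∃ l : List G, l.prod = g ∧ (∀ a ∈ l, a ∈ A) ∧
      ∀ p, p <+: l → p.prod ∈ (H : Set G) * D) : H.FG := by
  -- With `1` among the letters, `H ∩ D` consists of Schreier generators.
  let T := schreierGenerators H (insert 1 A) (insert 1 D)
  have hT : T.Finite :=
    (((hD.insert 1).mul (hA.insert 1)).mul (hD.insert 1).inv).subset Set.inter_subset_right
  have hTH : Subgroup.closure T ≤ H := (Subgroup.closure_le H).2 Set.inter_subset_left
  refine (Subgroup.fg_iff H).2 ⟨T, le_antisymm hTH fun g hg => ?_, hT⟩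
  obtain ⟨l, rfl, hlA, hlD⟩ := h g hg
  obtain ⟨t, ht, d, hd, htd : t * d = l.prod⟩ :=
    prod_mem_closure_schreierGenerators_mul (Set.mem_insert 1 D) l
      (fun a ha => Set.mem_insert_of_mem 1 (hlA a ha))
      fun p hp => Set.mul_subset_mul_left (Set.subset_insert 1 D) (hlD p hp)
  have hdH : d ∈ H := (H.mul_mem_cancel_left (hTH ht)).1 (htd ▸ hg)
  have hdT : d ∈ T :=
    ⟨hdH, d * 1, Set.mul_mem_mul hd (Set.mem_insert 1 A), 1, by simp, by simp⟩
  exact htd ▸ mul_mem ht (Subgroup.subset_closure hdT)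

end Group

variable {α : Type*} {H : Subgroup (FreeGroup α)} {u v w : List (α × Bool)}

section ReducedWords

theorem red_of_mk_eq (h : mk v = mk w) (hw : IsReduced w) : Red v w := by
  obtain ⟨z, hvz, hwz⟩ := Red.exact.1 h
  rwa [hw.red_iff_eq.1 hwz] at hvz

theorem isReduced_append_iff :
    IsReduced (u ++ v) ↔ IsReduced u ∧ IsReduced (u.getLast?.toList ++ v) := by
  rcases List.eq_nil_or_concat u with rfl | ⟨s, a, rfl⟩
  · simp
  · rw [List.concat_eq_append, List.getLast?_concat, Option.toList_some]
    exact ⟨fun h => ⟨h.infix (List.prefix_append _ v).isInfix, h.infix ⟨s, [], by simp⟩⟩,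
      fun ⟨hs, hv⟩ => hs.append_overlap hv (List.cons_ne_nil a [])⟩

theorem isReduced_invRev (hv : IsReduced v) : IsReduced (invRev v) := by
  classical
  rw [isReduced_iff_reduce_eq, reduce_invRev, hv.reduce_eq]

theorem isReduced_append_invRev (hu : IsReduced u) (hv : IsReduced v)
    (h : u.getLast? ≠ v.getLast?) : IsReduced (u ++ invRev v) := by
  refine List.isChain_append.2 ⟨hu, isReduced_invRev hv, fun a ha b hb hab => ?_⟩
  obtain ⟨c, hc, rfl⟩ : ∃ c ∈ v.getLast?, (c.1, !c.2) = b := by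
    simpa [invRev] using hb
  have hac : a ≠ c := fun hac => h (by rw [Option.mem_def.1 ha, Option.mem_def.1 hc, hac])
  exact Bool.eq_not_of_ne fun h2 => hac (Prod.ext hab h2)

theorem eq_nil_of_isReduced_append_invRev_self (h : IsReduced (v ++ invRev v)) : v = [] := by
  have hred : Red [] (v ++ invRev v) :=
    red_of_mk_eq (by rw [← mul_mk, ← inv_mk, mul_inv_cancel, one_eq_mk]) h
  exact (List.append_eq_nil_iff.1 (Red.nil_iff.1 hred)).1

end ReducedWords

section PathVertices

/-- The vertices of the Cayley tree of the free group visited by the path that starts at `1` and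
reads the (not necessarily reduced) word `w`. -/
def pathVertices (w : List (α × Bool)) : Set (FreeGroup α) :=
  mk '' {p | p <+: w}

theorem finite_pathVertices (w : List (α × Bool)) : (pathVertices w).Finite :=
  ((List.finite_toSet w.inits).subset fun p hp => (List.mem_inits p w).2 hp).image mk

theorem pathVertices_nil : pathVertices ([] : List (α × Bool)) = {1} := by
  simp [pathVertices, one_eq_mk]

theorem pathVertices_append (u v : List (α × Bool)) :
    pathVertices (u ++ v) = pathVertices u ∪ mk u • pathVertices v := by
  apply Set.Subset.antisymm
  · rintro _ ⟨p, hp, rfl⟩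
    rcases List.prefix_or_prefix_of_prefix hp (List.prefix_append u v) with h | ⟨q, rfl⟩
    · exact .inl ⟨p, h, rfl⟩
    · exact .inr ⟨mk q, ⟨q, (List.prefix_append_right_inj u).1 hp, rfl⟩, mul_mk⟩
  · rintro _ (⟨p, hp, rfl⟩ | ⟨_, ⟨q, hq, rfl⟩, rfl⟩)
    · exact ⟨p, hp.trans (List.prefix_append u v), rfl⟩
    · exact ⟨u ++ q, (List.prefix_append_right_inj u).2 hq, mul_mk.symm⟩

theorem pathVertices_subset_of_step (h : Red.Step v w) : pathVertices w ⊆ pathVertices v := by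
  obtain @⟨u, z, x, b⟩ := h
  have hmk : mk (u ++ [(x, b), (x, !b)]) = mk u := by
    rw [← mul_mk, show mk [(x, b), (x, !b)] = 1 from Quot.sound Red.Step.cons_not, mul_one]
  rw [show u ++ (x, b) :: (x, !b) :: z = u ++ [(x, b), (x, !b)] ++ z by simp,
    pathVertices_append, pathVertices_append, pathVertices_append, hmk]
  exact Set.union_subset_union_left _ Set.subset_union_left

theorem pathVertices_subset_of_red (h : Red v w) : pathVertices w ⊆ pathVertices v := by
  induction h with
  | refl => exact subset_rfl
  | tail _ hstep ih => exact (pathVertices_subset_of_step hstep).trans ih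

theorem exists_word_of_mem_closure {W : Set (List (α × Bool))} {g : FreeGroup α}
    (hg : g ∈ Submonoid.closure (mk '' W)) :
    ∃ w, mk w = g ∧
      pathVertices w ⊆ (Submonoid.closure (mk '' W) : Set (FreeGroup α)) *
        insert 1 (⋃ s ∈ W, pathVertices s) ∧
      ∀ a ∈ w, ∃ s ∈ W, a ∈ s := by
  induction hg using Submonoid.closure_induction with
  | mem g hg =>
    obtain ⟨s, hs, rfl⟩ := hg
    refine ⟨s, rfl, fun x hx => ?_, fun a ha => ⟨s, hs, ha⟩⟩
    exact ⟨1, one_mem _, x, .inr (Set.mem_biUnion hs hx), one_mul x⟩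
  | one =>
    refine ⟨[], one_eq_mk.symm, ?_, by simp⟩
    rw [pathVertices_nil, Set.singleton_subset_iff]
    exact ⟨1, one_mem _, 1, Set.mem_insert 1 _, one_mul 1⟩
  | mul g h hg _ ihg ihh =>
    obtain ⟨u, rfl, hu, hau⟩ := ihg
    obtain ⟨v, rfl, hv, hav⟩ := ihh
    refine ⟨u ++ v, mul_mk.symm, ?_, fun a ha => (List.mem_append.1 ha).elim (hau a) (hav a)⟩
    rw [pathVertices_append]
    refine Set.union_subset hu ?_
    rintro _ ⟨x, hx, rfl⟩
    obtain ⟨t, ht, d, hd, rfl⟩ := hv hx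
    exact ⟨mk u * t, mul_mem hg ht, d, hd, mul_assoc _ _ _⟩

end PathVertices

section FiniteCore

/-- The language of reduced words representing elements of `H`: the language `LH` for an arbitrary
basis `α`, without decidable equality. -/
def reducedWords (H : Subgroup (FreeGroup α)) : Language (α × Bool) :=
  {w | IsReduced w ∧ mk w ∈ H}

/-- The Stallings core graph of `H` is finite. Its vertices are the cosets `H g` visited by reduced
words of `H`, so there are finitely many of them when these words stay within `H * D` for a finite
`D`. Over an infinite basis there could still be infinitely many edges, so that finiteness of the
set `X` of edge labels is required separately. -/
def HasFiniteCore (H : Subgroup (FreeGroup α)) : Prop :=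
  ∃ D : Set (FreeGroup α), D.Finite ∧ ∃ X : Set (α × Bool), X.Finite ∧
    ∀ w ∈ reducedWords H, pathVertices w ⊆ (H : Set (FreeGroup α)) * D ∧ ∀ a ∈ w, a ∈ X

theorem hasFiniteCore_of_fg (hH : H.FG) : HasFiniteCore H := by
  obtain ⟨S, hS, hfin⟩ := (Submonoid.fg_iff _).1 ((Subgroup.fg_iff_submonoid_fg H).1 hH)
  let W : Set (List (α × Bool)) := Quot.out '' S
  have hW : W.Finite := hfin.image _
  have hWS : mk '' W = S := by
    rw [show mk '' W = (fun g => mk (Quot.out g)) '' S from Set.image_image _ _ _]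
    exact (Set.image_congr fun g _ => Quot.out_eq g).trans (Set.image_id' S)
  have hWH : Submonoid.closure (mk '' W) = H.toSubmonoid := by rw [hWS, hS]
  refine ⟨insert 1 (⋃ s ∈ W, pathVertices s),
    (hW.biUnion fun s _ => finite_pathVertices s).insert 1,
    ⋃ s ∈ W, {a | a ∈ s}, hW.biUnion fun s _ => s.finite_toSet, fun w hw => ?_⟩
  have hwW : mk w ∈ Submonoid.closure (mk '' W) := hWH.symm ▸ hw.2
  obtain ⟨v, hv, hvertices, hletters⟩ := exists_word_of_mem_closure hwW
  have hred : Red v w := red_of_mk_eq hv hw.1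
  rw [hWH] at hvertices
  refine ⟨(pathVertices_subset_of_red hred).trans hvertices, fun a ha => ?_⟩
  obtain ⟨s, hs, has⟩ := hletters a (hred.sublist.subset ha)
  exact Set.mem_biUnion hs has

theorem exists_mem_reducedWords {g : FreeGroup α} (hg : g ∈ H) :
    ∃ w ∈ reducedWords H, mk w = g := by
  classical
  exact ⟨g.toWord, ⟨isReduced_toWord, by rwa [mk_toWord]⟩, mk_toWord⟩

theorem prod_map_mk_singleton (w : List (α × Bool)) : (w.map fun a => mk [a]).prod = mk w := by
  induction w with
  | nil => exact one_eq_mk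
  | cons a w ih => rw [List.map_cons, List.prod_cons, ih, mul_mk, List.singleton_append]

theorem HasFiniteCore.fg (hH : HasFiniteCore H) : H.FG := by
  obtain ⟨D, hD, X, hX, hcore⟩ := hH
  refine fg_of_forall_prefix_prod_mem_mul (hX.image fun a => mk [a]) hD fun g hg => ?_
  obtain ⟨w, hw, rfl⟩ := exists_mem_reducedWords hg
  obtain ⟨hvertices, hletters⟩ := hcore w hw
  refine ⟨w.map fun a => mk [a], prod_map_mk_singleton w, ?_, fun p hp => ?_⟩
  · exact List.forall_mem_map.2 fun a ha => ⟨a, hletters a ha, rfl⟩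
  · obtain ⟨q, hq, rfl⟩ := List.prefix_map_iff.1 hp
    exact hvertices ⟨q, hq, (prod_map_mk_singleton q).symm⟩

theorem hasFiniteCore_iff_fg : HasFiniteCore H ↔ H.FG :=
  ⟨HasFiniteCore.fg, hasFiniteCore_of_fg⟩

end FiniteCore

section LeftQuotient

/-- The words that complete a path ending at `g` with last letter `l` (`none` for the empty path) to
a reduced path ending in `H`. -/
def reducedContinuations (H : Subgroup (FreeGroup α)) (g : FreeGroup α)
    (l : Option (α × Bool)) : Language (α × Bool) :=
  {v | IsReduced (l.toList ++ v) ∧ g * mk v ∈ H}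

theorem reducedContinuations_mul_left {h g : FreeGroup α} (hh : h ∈ H) (l : Option (α × Bool)) :
    reducedContinuations H (h * g) l = reducedContinuations H g l := by
  ext v
  exact and_congr_right fun _ => by rw [mul_assoc, H.mul_mem_cancel_left hh]

theorem leftQuotient_reducedWords (hu : IsReduced u) :
    (reducedWords H).leftQuotient u = reducedContinuations H (mk u) u.getLast? := by
  ext v
  change IsReduced (u ++ v) ∧ mk (u ++ v) ∈ H ↔ _
  rw [isReduced_append_iff, and_iff_right hu, ← mul_mk]
  rfl

theorem HasFiniteCore.finite_range_leftQuotient (hH : HasFiniteCore H) :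
    (Set.range (reducedWords H).leftQuotient).Finite := by
  obtain ⟨D, hD, X, hX, hcore⟩ := hH
  refine ((hD.image2 (reducedContinuations H) ((hX.image some).insert none)).insert 0).subset ?_
  rintro _ ⟨u, rfl⟩
  rcases Set.eq_empty_or_nonempty {v | u ++ v ∈ reducedWords H} with hempty | ⟨v, huv⟩
  · exact .inl hempty
  · obtain ⟨hvertices, hletters⟩ := hcore _ huv
    obtain ⟨h, hh, d, hd, hhd : h * d = mk u⟩ := hvertices ⟨u, List.prefix_append u v, rfl⟩
    refine .inr ⟨d, hd, u.getLast?, ?_, ?_⟩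
    · cases hlast : u.getLast? with
      | none => exact .inl rfl
      | some a =>
        exact .inr ⟨a, hletters a (List.mem_append_left v (List.mem_of_getLast? hlast)), rfl⟩
    · rw [leftQuotient_reducedWords (isReduced_append_iff.1 huv.1).1, ← hhd,
        reducedContinuations_mul_left hh]

theorem append_mem_iff_of_leftQuotient_eq {β : Type*} {L : Language β} {x y : List β}
    (h : L.leftQuotient x = L.leftQuotient y) (z : List β) : x ++ z ∈ L ↔ y ++ z ∈ L := by
  rw [← Language.mem_leftQuotient, h, Language.mem_leftQuotient]

theorem mk_mul_inv_mem_of_leftQuotient_eq {z : List (α × Bool)}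
    (h : (reducedWords H).leftQuotient u = (reducedWords H).leftQuotient v)
    (huz : u ++ z ∈ reducedWords H) : mk u * (mk v)⁻¹ ∈ H := by
  have hvz : v ++ z ∈ reducedWords H := (append_mem_iff_of_leftQuotient_eq h _).1 huz
  have hmem := H.mul_mem huz.2 (H.inv_mem hvz.2)
  rwa [← mul_mk, ← mul_mk, mul_inv_rev, mul_assoc, mul_inv_cancel_left] at hmem

theorem eq_nil_of_leftQuotient_eq {z : List (α × Bool)}
    (h : (reducedWords H).leftQuotient u = (reducedWords H).leftQuotient v)
    (huz : u ++ z ∈ reducedWords H) (hlast : u.getLast? ≠ v.getLast?) : v = [] := by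
  have hvz : v ++ z ∈ reducedWords H := (append_mem_iff_of_leftQuotient_eq h _).1 huz
  have hu : IsReduced u := (isReduced_append_iff.1 huz.1).1
  have hv : IsReduced v := (isReduced_append_iff.1 hvz.1).1
  have huv : u ++ invRev v ∈ reducedWords H := by
    refine ⟨isReduced_append_invRev hu hv hlast, ?_⟩
    rw [← mul_mk, ← inv_mk]
    exact mk_mul_inv_mem_of_leftQuotient_eq h huz
  have hvv : v ++ invRev v ∈ reducedWords H := (append_mem_iff_of_leftQuotient_eq h _).1 huv
  exact eq_nil_of_isReduced_append_invRev_self hvv.1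

theorem getLast?_eq_of_leftQuotient_eq {z : List (α × Bool)}
    (h : (reducedWords H).leftQuotient u = (reducedWords H).leftQuotient v)
    (huz : u ++ z ∈ reducedWords H) : u.getLast? = v.getLast? := by
  by_contra hlast
  have hv : v = [] := eq_nil_of_leftQuotient_eq h huz hlast
  have hu : u = [] :=
    eq_nil_of_leftQuotient_eq h.symm ((append_mem_iff_of_leftQuotient_eq h _).1 huz) (Ne.symm hlast)
  exact hlast (by rw [hu, hv])

theorem hasFiniteCore_of_finite_range_leftQuotient
    (hfin : (Set.range (reducedWords H).leftQuotient).Finite) : HasFiniteCore H := by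
  have : Finite (Set.range (reducedWords H).leftQuotient) := hfin.to_subtype
  let rep (u : List (α × Bool)) : List (α × Bool) :=
    Set.rangeSplitting (reducedWords H).leftQuotient ⟨_, u, rfl⟩
  have hrep (u : List (α × Bool)) :
      (reducedWords H).leftQuotient u = (reducedWords H).leftQuotient (rep u) :=
    (Set.apply_rangeSplitting (reducedWords H).leftQuotient ⟨_, u, rfl⟩).symm
  have hR : (Set.range rep).Finite :=
    (Set.finite_range (Set.rangeSplitting (reducedWords H).leftQuotient)).subset
      (Set.range_subset_iff.2 fun _ => ⟨_, rfl⟩)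
  refine ⟨mk '' Set.range rep, hR.image mk, ⋃ r ∈ Set.range rep, {a | a ∈ r},
    hR.biUnion fun r _ => r.finite_toSet, fun w hw => ⟨?_, fun a ha => ?_⟩⟩
  · rintro _ ⟨u, ⟨z, rfl⟩, rfl⟩
    exact ⟨_, mk_mul_inv_mem_of_leftQuotient_eq (hrep u) hw, _, ⟨rep u, ⟨u, rfl⟩, rfl⟩,
      inv_mul_cancel_right _ _⟩
  · obtain ⟨s, z, rfl⟩ := List.append_of_mem ha
    have hlast : (s ++ [a]).getLast? = (rep (s ++ [a])).getLast? :=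
      getLast?_eq_of_leftQuotient_eq (z := z) (hrep _) (by simpa using hw)
    rw [List.getLast?_concat] at hlast
    exact Set.mem_biUnion ⟨s ++ [a], rfl⟩ (List.mem_of_getLast? hlast.symm)

theorem finite_range_leftQuotient_iff_hasFiniteCore :
    (Set.range (reducedWords H).leftQuotient).Finite ↔ HasFiniteCore H :=
  ⟨hasFiniteCore_of_finite_range_leftQuotient, HasFiniteCore.finite_range_leftQuotient⟩

end LeftQuotient

theorem regular_iff_fg_general (H : Subgroup (FreeGroup α)) :
    (reducedWords H).IsRegular ↔ H.FG :=
  Language.isRegular_iff_finite_range_leftQuotient.trans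
    (finite_range_leftQuotient_iff_hasFiniteCore.trans hasFiniteCore_iff_fg)

theorem LH_eq_reducedWords (m : ℕ) (H : Subgroup (FreeGroup (Fin m))) :
    LH m H = reducedWords H :=
  Set.ext fun _ => and_congr_left fun _ => isReduced_iff_reduce_eq.symm

/-- The language `L_H` of reduced words representing elements of `H ≤ F_m` is regular
(accepted by some DFA with finitely many states) if and only if `H` is finitely
generated. -/
theorem regular_iff_fg (m : ℕ) (hm : 1 ≤ m) (H : Subgroup (FreeGroup (Fin m))) :
    (∃ (σ : Type) (_ : Fintype σ) (M : DFA (Fin m × Bool) σ), M.accepts = LH m H) ↔ H.FG := by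
  rw [LH_eq_reducedWords]
  exact regular_iff_fg_general H
end

section
/- Let m ≥ 1 and let H be a finitely generated subgroup of the free group F_m. Then the cogrowth series H(z) = Σ_{n≥0} |H_n| zⁿ is rational: there exist polynomials p and q with rational coefficients, q having nonzero constant term, such that q(z) · Σ_{n≥0} |H_n| zⁿ = p(z) in the ring of formal power series. -/
/-- `|H_n|`: the number of elements of the subgroup `H` of the free group `F_m`
whose reduced word length is `n` (equivalently, the number of words of length `n`
in the language `L_H` of reduced words representing elements of `H`). -/
noncomputable def cogrowthCoeff (m : ℕ) (H : Subgroup (FreeGroup (Fin m))) (n : ℕ) : ℕ :=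
  Nat.card {g : FreeGroup (Fin m) // g ∈ H ∧ (FreeGroup.toWord g).length = n}

/-!
Let `x` be the base point of the Schreier graph of `H`. A finite generating set of `H` labels
finitely many closed paths at `x`, which together use a finite set `E` of edges. Concatenating
closed paths and cancelling backtracks never leaves `E`, so every reduced word representing an
element of `H` is read along edges in `E`. How such a word may be continued depends only on the
last edge read: its endpoint tells which continuations return to `x`, its label which ones stay
reduced. Hence the language of these words has finitely many left quotients, and uses finitely many
letters even when the basis is infinite. The counting sequences of the left quotients satisfy a
first-order linear recurrence `aₙ₊₁ = M aₙ`, whose generating functions have the common denominator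
`det (1 - X M)`.
-/

open scoped Polynomial

section LinearRecurrence

open Matrix
open Polynomial (C X coeToPowerSeries.ringHom)

variable {R σ : Type*} [CommRing R] [Fintype σ] [DecidableEq σ]

theorem one_sub_X_smul_mulVec_mk (M : Matrix σ σ R) {a : ℕ → σ → R}
    (ha : ∀ n, a (n + 1) = M *ᵥ a n) :
    (1 - (PowerSeries.X : PowerSeries R) • M.map PowerSeries.C) *ᵥ
        (fun s => PowerSeries.mk fun n => a n s) =
      fun s => PowerSeries.C (a 0 s) := by
  rw [sub_mulVec, one_mulVec, smul_mulVec]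
  ext s n
  cases n with
  | zero => simp
  | succ n => simp [PowerSeries.coeff_succ_X_mul, mulVec, dotProduct, ha]

theorem mapMatrix_coe_one_sub_X_smul (M : Matrix σ σ R) :
    (coeToPowerSeries.ringHom (R := R)).mapMatrix (1 - (X : R[X]) • M.map C) =
      1 - (PowerSeries.X : PowerSeries R) • M.map PowerSeries.C := by
  ext1 i j
  simp [one_apply, apply_ite, PowerSeries.X_mul]

theorem exists_charpolyRev_mul_mk_eq (M : Matrix σ σ R) {a : ℕ → σ → R}
    (ha : ∀ n, a (n + 1) = M *ᵥ a n) (s : σ) :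
    ∃ p : R[X], (M.charpolyRev : PowerSeries R) * PowerSeries.mk (fun n => a n s) = p := by
  let φ : R[X] →+* PowerSeries R := coeToPowerSeries.ringHom
  let B : Matrix σ σ R[X] := 1 - (X : R[X]) • M.map C
  let f : σ → PowerSeries R := fun t => PowerSeries.mk fun n => a n t
  have hB : φ.mapMatrix B *ᵥ f = φ ∘ fun t => C (a 0 t) := by
    rw [mapMatrix_coe_one_sub_X_smul, one_sub_X_smul_mulVec_mk M ha]
    ext1 t
    simp [φ]
  have hdet : φ B.det • f = φ ∘ (B.adjugate *ᵥ fun t => C (a 0 t)) := by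
    calc φ B.det • f = (φ.mapMatrix B).adjugate *ᵥ (φ.mapMatrix B *ᵥ f) := by
          rw [mulVec_mulVec, adjugate_mul, ← RingHom.map_det, smul_mulVec, one_mulVec]
      _ = φ.mapMatrix B.adjugate *ᵥ (φ ∘ fun t => C (a 0 t)) := by rw [hB, RingHom.map_adjugate]
      _ = φ ∘ (B.adjugate *ᵥ fun t => C (a 0 t)) := funext fun t => (φ.map_mulVec _ _ t).symm
  exact ⟨_, congrFun hdet s⟩

end LinearRecurrence

section Growth

open scoped Matrix

variable {α : Type*} {L : Language α} {A : Finset α}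

/-- The growth function of a language: the number of its words of length `n`. It is `0` when there
are infinitely many such words. -/
noncomputable def languageGrowth (L : Language α) (n : ℕ) : ℕ :=
  Nat.card {w : List α // w ∈ L ∧ w.length = n}

theorem finite_mem_and_length_eq (hA : ∀ w ∈ L, ∀ c ∈ w, c ∈ A) (n : ℕ) :
    Finite {w : List α // w ∈ L ∧ w.length = n} := by
  refine (((List.finite_length_eq A n).image (List.map (↑))).subset ?_).to_subtype
  rintro w ⟨hw, rfl⟩
  lift w to List A using hA w hw
  exact ⟨w, by simp, rfl⟩

theorem languageGrowth_succ (hA : ∀ w ∈ L, ∀ c ∈ w, c ∈ A) (n : ℕ) :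
    languageGrowth L (n + 1) = ∑ c ∈ A, languageGrowth (L.leftQuotient [c]) n := by
  have (c : A) : Finite {w : List α // w ∈ L.leftQuotient [c.1] ∧ w.length = n} :=
    finite_mem_and_length_eq (fun w hw d hd => hA (c.1 :: w) hw d (List.mem_cons_of_mem _ hd)) n
  let cons : (Σ c : A, {w // w ∈ L.leftQuotient [c.1] ∧ w.length = n}) →
      {w // w ∈ L ∧ w.length = n + 1} :=
    fun x => ⟨x.1 :: x.2.1, x.2.2.1, congrArg (· + 1) x.2.2.2⟩
  have hcons : cons.Bijective := by
    constructor
    · rintro ⟨c, w, hw⟩ ⟨d, v, hv⟩ h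
      obtain ⟨hcd, rfl⟩ : c.1 = d.1 ∧ w = v := by simpa [cons] using h
      obtain rfl := Subtype.ext hcd
      rfl
    · rintro ⟨_ | ⟨c, w⟩, hw, hn⟩
      · simp at hn
      · exact ⟨⟨⟨c, hA _ hw c List.mem_cons_self⟩, w, hw, by simpa using hn⟩, rfl⟩
  calc languageGrowth L (n + 1)
      = ∑ c : A, languageGrowth (L.leftQuotient [c.1]) n := by
        rw [languageGrowth, ← Nat.card_eq_of_bijective cons hcons, Nat.card_sigma]; rfl
    _ = ∑ c ∈ A, languageGrowth (L.leftQuotient [c]) n :=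
        A.sum_coe_sort fun c => languageGrowth (L.leftQuotient [c]) n

theorem exists_mul_mk_languageGrowth_eq (R : Type*) [CommRing R] (hL : L.IsRegular)
    (hA : ∀ w ∈ L, ∀ c ∈ w, c ∈ A) :
    ∃ p q : R[X], q.coeff 0 = 1 ∧
      (q : PowerSeries R) * PowerSeries.mk (fun n => (languageGrowth L n : R)) = p := by
  classical
  let D := L.toDFA
  have := hL.finite_range_leftQuotient.fintype
  let M : Matrix (Set.range L.leftQuotient) (Set.range L.leftQuotient) R :=
    .of fun s t => ∑ c ∈ A, if D.step s c = t then 1 else 0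
  have hstate (s : Set.range L.leftQuotient) : ∀ w ∈ s.1, ∀ c ∈ w, c ∈ A := by
    obtain ⟨_, v, rfl⟩ := s
    exact fun w hw c hc => hA _ hw c (List.mem_append_right v hc)
  let a : ℕ → Set.range L.leftQuotient → R := fun n s => languageGrowth s.1 n
  have ha (n : ℕ) : a (n + 1) = M *ᵥ a n := by
    ext s
    simp only [a, M, languageGrowth_succ (hstate s), Matrix.mulVec, dotProduct, Matrix.of_apply,
      Finset.sum_mul]
    rw [Finset.sum_comm]
    simp [D]
  obtain ⟨p, hp⟩ := exists_charpolyRev_mul_mk_eq M ha D.start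
  refine ⟨p, M.charpolyRev, ?_, hp⟩
  rw [Polynomial.coeff_zero_eq_eval_zero, Matrix.eval_charpolyRev]

end Growth

section SchreierGraph

open FreeGroup

variable {α β : Type*} [MulAction (FreeGroup α) β]

/-- The edges traversed by the path from `x` labelled `w` in the Schreier graph of an action of a
free group. The pair `(y, c)` stands for the edge labelled `c` from `y` to `c⁻¹ • y`; the inverse
makes a left action read words from left to right, so the path ends at `(mk w)⁻¹ • x`. -/
def schreierPath (x : β) : List (α × Bool) → List (β × (α × Bool))
  | [] => []
  | c :: w => (x, c) :: schreierPath ((mk [c])⁻¹ • x) w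

theorem map_snd_schreierPath (x : β) (w : List (α × Bool)) :
    (schreierPath x w).map Prod.snd = w := by
  induction w generalizing x with
  | nil => rfl
  | cons c w ih => rw [schreierPath, List.map_cons, ih]

theorem schreierPath_append (x : β) (v w : List (α × Bool)) :
    schreierPath x (v ++ w) = schreierPath x v ++ schreierPath ((mk v)⁻¹ • x) w := by
  induction v generalizing x with
  | nil => simp [schreierPath, ← one_eq_mk]
  | cons c v ih =>
    have hmk : mk (c :: v) = mk [c] * mk v := by rw [mul_mk, List.singleton_append]
    rw [List.cons_append, schreierPath, ih, smul_smul, ← mul_inv_rev, ← hmk, schreierPath,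
      List.cons_append]

theorem schreierPath_sublist_of_red (x : β) {v w : List (α × Bool)} (h : Red w v) :
    (schreierPath x v).Sublist (schreierPath x w) := by
  induction h with
  | refl => exact .refl _
  | tail _ hstep ih =>
    refine .trans ?_ ih
    obtain @⟨u, v, c, b⟩ := hstep
    have hend (y : β) : (mk [(c, !b)])⁻¹ • (mk [(c, b)])⁻¹ • y = y := by
      have hinv : mk [(c, !b)] = (mk [(c, b)])⁻¹ := by simp [inv_mk, invRev]
      rw [hinv, inv_inv, smul_inv_smul]
    rw [schreierPath_append, schreierPath_append, schreierPath, schreierPath, hend]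
    exact .append (.refl _) (.cons _ (.cons _ (.refl _)))

theorem exists_finite_schreierPath_toWord_subset [DecidableEq α] {x : β}
    {H : Subgroup (FreeGroup α)} (hH : H.FG) (hx : H ≤ MulAction.stabilizer (FreeGroup α) x) :
    ∃ E : Set (β × (α × Bool)), E.Finite ∧ ∀ g ∈ H, ∀ e ∈ schreierPath x g.toWord, e ∈ E := by
  obtain ⟨S, hS⟩ := (Subgroup.fg_iff_submonoid_fg H).mp hH
  refine ⟨⋃ s ∈ S, {e | e ∈ schreierPath x s.toWord},
    S.finite_toSet.biUnion fun s _ => List.finite_toSet _, fun g hg => ?_⟩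
  rw [← Subgroup.mem_toSubmonoid, ← hS] at hg
  induction hg using Submonoid.closure_induction with
  | mem s hs => exact fun e he => Set.mem_biUnion hs he
  | one => simp [schreierPath]
  | mul g h hg _ ihg ihh =>
    intro e he
    have hgx : g⁻¹ • x = x := by
      rw [inv_smul_eq_iff, eq_comm]
      exact hx (by rwa [hS] at hg)
    have hred : Red (g.toWord ++ h.toWord) (g * h).toWord := toWord_mul g h ▸ reduce.red
    have hmem := (schreierPath_sublist_of_red x hred).subset he
    rw [schreierPath_append, mk_toWord, hgx, List.mem_append] at hmem
    exact hmem.elim (ihg e) (ihh e)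

end SchreierGraph

section ReducedLanguage

open FreeGroup

variable {α : Type*} {H : Subgroup (FreeGroup α)}

/-- The language `L_H` of reduced words representing elements of `H`. -/
def reducedLanguage (H : Subgroup (FreeGroup α)) : Language (α × Bool) :=
  {w | IsReduced w ∧ mk w ∈ H}

theorem languageGrowth_reducedLanguage [DecidableEq α] (H : Subgroup (FreeGroup α)) (n : ℕ) :
    languageGrowth (reducedLanguage H) n =
      Nat.card {g : FreeGroup α // g ∈ H ∧ g.toWord.length = n} :=
  Nat.card_congr
    { toFun w := ⟨mk w.1, w.2.1.2, by rw [toWord_mk, w.2.1.1.reduce_eq, w.2.2]⟩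
      invFun g := ⟨g.1.toWord, ⟨isReduced_toWord, by simpa only [mk_toWord] using g.2.1⟩, g.2.2⟩
      left_inv w := Subtype.ext w.2.1.1.reduce_eq
      right_inv _ := Subtype.ext mk_toWord }

variable {β : Type*} [MulAction (FreeGroup α) β] {x : β}

theorem exists_finite_schreierPath_subset (hH : H.FG)
    (hx : H ≤ MulAction.stabilizer (FreeGroup α) x) :
    ∃ E : Set (β × (α × Bool)), E.Finite ∧
      ∀ w ∈ reducedLanguage H, ∀ e ∈ schreierPath x w, e ∈ E := by
  classical
  obtain ⟨E, hE, hHE⟩ := exists_finite_schreierPath_toWord_subset hH hx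
  refine ⟨E, hE, fun w hw => ?_⟩
  simpa only [toWord_mk, hw.1.reduce_eq] using hHE _ hw.2

theorem exists_finset_forall_mem_reducedLanguage (hH : H.FG) :
    ∃ A : Finset (α × Bool), ∀ w ∈ reducedLanguage H, ∀ c ∈ w, c ∈ A := by
  let x : FreeGroup α ⧸ H := (1 : FreeGroup α)
  obtain ⟨E, hE, hHE⟩ :=
    exists_finite_schreierPath_subset (x := x) hH (MulAction.stabilizer_quotient H).ge
  refine ⟨(hE.image Prod.snd).toFinset, fun w hw c hc => ?_⟩
  rw [← map_snd_schreierPath x w, List.mem_map] at hc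
  obtain ⟨e, he, rfl⟩ := hc
  exact (hE.image Prod.snd).mem_toFinset.mpr ⟨e, hHE w hw e he, rfl⟩

theorem mk_append_mem_stabilizer_iff {v w : List (α × Bool)} :
    mk (v ++ w) ∈ MulAction.stabilizer (FreeGroup α) x ↔ mk w • x = (mk v)⁻¹ • x := by
  rw [MulAction.mem_stabilizer_iff, ← mul_mk, mul_smul, smul_eq_iff_eq_inv_smul]

/-- The words that may follow a reduced word whose path from `x` has last edge `e`, if the whole is
to be reduced and its path is to return to `x`. -/
def closingContinuations (x : β) (e : β × (α × Bool)) : Language (α × Bool) :=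
  {y | IsReduced (e.2 :: y) ∧ mk y • x = (mk [e.2])⁻¹ • e.1}

theorem leftQuotient_reducedLanguage_stabilizer {u : List (α × Bool)} {c : α × Bool}
    (huc : IsReduced (u ++ [c])) :
    (reducedLanguage (MulAction.stabilizer (FreeGroup α) x)).leftQuotient (u ++ [c]) =
      closingContinuations x ((mk u)⁻¹ • x, c) := by
  ext y
  have hred : IsReduced (u ++ [c] ++ y) ↔ IsReduced (c :: y) := by
    rw [List.append_assoc, List.singleton_append]
    exact List.isChain_split.trans (and_iff_right huc)
  refine and_congr hred (mk_append_mem_stabilizer_iff.trans ?_)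
  rw [← mul_mk, mul_inv_rev, mul_smul]

theorem isRegular_reducedLanguage_stabilizer (hx : (MulAction.stabilizer (FreeGroup α) x).FG) :
    (reducedLanguage (MulAction.stabilizer (FreeGroup α) x)).IsRegular := by
  obtain ⟨E, hE, hxE⟩ := exists_finite_schreierPath_subset hx le_rfl
  let L := reducedLanguage (MulAction.stabilizer (FreeGroup α) x)
  refine .of_finite_range_leftQuotient
    ((((hE.image (closingContinuations x)).insert 0).insert L).subset ?_)
  rintro _ ⟨v, rfl⟩
  by_cases hv : ∃ y, v ++ y ∈ L
  · obtain ⟨y, hy⟩ := hv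
    obtain rfl | ⟨u, c, rfl⟩ := v.eq_nil_or_concat'
    · exact .inl rfl
    · have hedge : ((mk u)⁻¹ • x, c) ∈ E :=
        hxE _ hy _ (by simp [schreierPath_append, schreierPath])
      have hred : IsReduced (u ++ [c]) := hy.1.infix (List.prefix_append _ y).isInfix
      exact .inr (.inr ⟨_, hedge, (leftQuotient_reducedLanguage_stabilizer hred).symm⟩)
  · refine .inr (.inl ?_)
    ext y
    exact iff_of_false (fun hy => hv ⟨y, hy⟩) (Language.notMem_zero y)

theorem isRegular_reducedLanguage (hH : H.FG) : (reducedLanguage H).IsRegular := by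
  rw [← MulAction.stabilizer_quotient H] at hH
  simpa only [MulAction.stabilizer_quotient] using isRegular_reducedLanguage_stabilizer hH

end ReducedLanguage

theorem cogrowth_rational_general {α : Type*} [DecidableEq α] (R : Type*) [CommRing R]
    {H : Subgroup (FreeGroup α)} (hH : H.FG) :
    ∃ p q : R[X], q.coeff 0 = 1 ∧
      (q : PowerSeries R) * PowerSeries.mk (fun n =>
        (Nat.card {g : FreeGroup α // g ∈ H ∧ g.toWord.length = n} : R)) = p := by
  obtain ⟨A, hA⟩ := exists_finset_forall_mem_reducedLanguage hH
  simpa only [languageGrowth_reducedLanguage] using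
    exists_mul_mk_languageGrowth_eq R (isRegular_reducedLanguage hH) hA

/-- If `H` is a finitely generated subgroup of the free group `F_m` (`m ≥ 1`),
then the cogrowth series `H(z) = Σ_{n≥0} |H_n| zⁿ` is a rational power series. -/
theorem cogrowth_rational (m : ℕ) (hm : 1 ≤ m) (H : Subgroup (FreeGroup (Fin m)))
    (hfg : H.FG) :
    ∃ p q : Polynomial ℚ, q.coeff 0 ≠ 0 ∧
      (q : PowerSeries ℚ) * PowerSeries.mk (fun n => (cogrowthCoeff m H n : ℚ)) =
        (p : PowerSeries ℚ) := by
  obtain ⟨p, q, hq, h⟩ := cogrowth_rational_general ℚ hfg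
  exact ⟨p, q, hq ▸ one_ne_zero, h⟩
end

section
/- Let M be a nondeterministic finite automaton over a finite alphabet with finite state set. Suppose M is essential and has bounded ambiguity. Then the entropy of the language accepted by M equals the entropy of the walk language W(M) of its transition graph: h(L(M)) = h(W(M)). -/
/-- An accepting run of the word `w` in the NFA `M`: a sequence of `w.length + 1`
states starting in an initial state, ending in a final state, and following the
transition relation. -/
def AccRun {α σ : Type*} (M : NFA α σ) (w : List α) (r : Fin (w.length + 1) → σ) : Prop :=
  r 0 ∈ M.start ∧ r (Fin.last w.length) ∈ M.accept ∧
    ∀ i : Fin w.length, r i.succ ∈ M.step (r i.castSucc) (w.get i)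

/-- The language accepted by the NFA `M`: words admitting at least one accepting run. -/
def NLang {α σ : Type*} (M : NFA α σ) : Set (List α) :=
  {w | ∃ r, AccRun M w r}

/-- `M` is essential: every state occurs in some accepting run. -/
def Essential {α σ : Type*} (M : NFA α σ) : Prop :=
  ∀ q : σ, ∃ (w : List α) (r : Fin (w.length + 1) → σ), AccRun M w r ∧ ∃ i, r i = q

/-- `M` has bounded ambiguity: some constant `K` bounds the number of accepting runs
of every word. -/
def BoundedAmbiguity {α σ : Type*} (M : NFA α σ) : Prop :=
  ∃ K : ℕ, ∀ w : List α, Nat.card {r : Fin (w.length + 1) → σ // AccRun M w r} ≤ K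

/-- The edge set of the NFA `M`: triples `(p, x, q)` with `q ∈ δ(p, x)`. -/
def Edge {α σ : Type*} (M : NFA α σ) : Type _ :=
  {e : σ × α × σ // e.2.2 ∈ M.step e.1 e.2.1}

/-- The walk language of `M` over the alphabet of edges: sequences of edges in which
the target of each edge equals the source of the next. -/
def WLang {α σ : Type*} (M : NFA α σ) : Set (List (Edge M)) :=
  {l | l.Chain' fun e f => e.1.2.2 = f.1.1}

/-- The entropy of a language `L`: `limsup (log |B_n(L)|) / n`, where `B_n(L)` is the
set of words of length `n` in `L`. -/
noncomputable def entropy {α : Type*} (L : Set (List α)) : ℝ :=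
  Filter.limsup
    (fun n : ℕ => Real.log (Nat.card {w : List α // w ∈ L ∧ w.length = n}) / n)
    Filter.atTop

/-!
Both languages are compared with the language `A` of walks from an initial to a final state.

* Reading labels maps `A` onto `L(M)`, preserving length, and the fibre over a word is in bijection
  with its accepting runs. Subexponentially many runs per word do not change the growth rate.
* If `M` is essential, every state `p` can be reached from an initial state by some walk `u`, and
  from every state `q` some walk `v` leads to a final state. Then `l ↦ u l v` embeds the walks from
  `p` to `q` into `A`, lengthening them by a constant. A nonempty walk is of this kind for one of
  the finitely many pairs `(p, q)`, so `A` and `W(M)` have the same growth rate.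
-/

open Filter ExpGrowth
open scoped ENNReal

section ExpGrowth

variable {u v : ℕ → ℝ≥0∞}

theorem expGrowthSup_comp_add_le (u : ℕ → ℝ≥0∞) (c : ℕ) :
    expGrowthSup (fun n => u (n + c)) ≤ expGrowthSup u := by
  refine le_of_forall_gt_imp_ge_of_dense fun b hb => ?_
  obtain rfl | hb_top := eq_or_ne b ⊤
  · exact le_top
  have hu : ∀ᶠ n in atTop, u (n + c) ≤ b.exp ^ c * b.exp ^ n := by
    filter_upwards [(tendsto_add_atTop_nat c).eventually (eventually_le_exp hb)] with n hn
    rwa [← pow_add, add_comm c n, ← EReal.exp_nmul, mul_comm]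
  calc expGrowthSup (fun n => u (n + c)) ≤ expGrowthSup fun n => b.exp ^ n :=
        expGrowthSup_le_of_eventually_le (ENNReal.pow_ne_top (by simpa using hb_top)) hu
    _ = b := by rw [expGrowthSup_pow, EReal.log_exp]

theorem expGrowthSup_one_sup (u : ℕ → ℝ≥0∞) : expGrowthSup (1 ⊔ u) = 0 ⊔ expGrowthSup u := by
  rw [expGrowthSup_sup]
  exact congrArg (· ⊔ _) (expGrowthSup_const one_ne_zero ENNReal.one_ne_top)

theorem expGrowthSup_mul_le_of_nonpos_left (hu : expGrowthSup u ≤ 0) :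
    expGrowthSup (u * v) ≤ expGrowthSup v := by
  have hone : expGrowthSup (1 ⊔ u) = 0 := by rw [expGrowthSup_one_sup, sup_eq_left.2 hu]
  calc expGrowthSup (u * v) ≤ expGrowthSup ((1 ⊔ u) * v) :=
        expGrowthSup_monotone (mul_le_mul_left le_sup_right v)
    _ ≤ expGrowthSup (1 ⊔ u) + expGrowthSup v :=
        expGrowthSup_mul_le (.inl (by simp [hone])) (.inl (by simp [hone]))
    _ = expGrowthSup v := by rw [hone, zero_add]

theorem log_one_sup_natCast (k : ℕ) : ENNReal.log (1 ⊔ k) = (Real.log k : EReal) := by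
  obtain rfl | hk := k.eq_zero_or_pos
  · simp
  · have hone : (1 : ℝ≥0∞) ≤ k := by exact_mod_cast hk
    rw [sup_eq_right.2 hone, ENNReal.log_pos_real (by positivity) (ENNReal.natCast_ne_top k),
      ENNReal.toReal_natCast]

end ExpGrowth

theorem ncard_le_mul_ncard_image {β γ : Type*} {s : Set β} (hs : s.Finite) (f : β → γ) {k : ℕ}
    (hk : ∀ c ∈ f '' s, {b ∈ s | f b = c}.ncard ≤ k) : s.ncard ≤ k * (f '' s).ncard := by
  classical
  lift s to Finset β using hs
  rw [← Finset.coe_image, Set.ncard_coe_finset, Set.ncard_coe_finset]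
  refine Finset.card_le_mul_card_image s k fun c hc => ?_
  rw [← Set.ncard_coe_finset, Finset.coe_filter]
  exact hk c (by simpa using hc)

/-- The set `B_n(L)` of words of length `n` in the language `L`. -/
def wordsOfLength {β : Type*} (L : Set (List β)) (n : ℕ) : Set (List β) :=
  {w | w ∈ L ∧ w.length = n}

/-- The exponential growth rate of `|B_n(L)|`. If `B_n(L)` is eventually empty it is `⊥`, whereas
`entropy L` is then `0` because `Real.log 0 = 0`. -/
noncomputable def growthRate {β : Type*} (L : Set (List β)) : EReal :=
  expGrowthSup fun n => ((wordsOfLength L n).ncard : ℝ≥0∞)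

section Languages

variable {β γ : Type*} {L L' : Set (List β)}

theorem finite_wordsOfLength [Finite β] (L : Set (List β)) (n : ℕ) : (wordsOfLength L n).Finite :=
  (List.finite_length_eq β n).subset fun _ h => h.2

theorem ncard_wordsOfLength_le [Finite β] (L : Set (List β)) (n : ℕ) :
    (wordsOfLength L n).ncard ≤ Nat.card β ^ n := by
  have := Fintype.ofFinite β
  calc (wordsOfLength L n).ncard ≤ {w : List β | w.length = n}.ncard :=
        Set.ncard_le_ncard (fun _ h => h.2) (List.finite_length_eq β n)
    _ = Nat.card (List.Vector β n) := rfl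
    _ = Nat.card β ^ n := by rw [Nat.card_eq_fintype_card, card_vector, Nat.card_eq_fintype_card]

theorem log_ncard_wordsOfLength_div_le [Finite β] (L : Set (List β)) (n : ℕ) :
    Real.log (wordsOfLength L n).ncard / n ≤ Real.log (Nat.card β) := by
  refine div_le_of_le_mul₀ n.cast_nonneg (Real.log_natCast_nonneg _) ?_
  obtain h | h := (wordsOfLength L n).ncard.eq_zero_or_pos
  · simpa [h] using mul_nonneg (Real.log_natCast_nonneg (Nat.card β)) n.cast_nonneg
  · rw [mul_comm, ← Real.log_pow]
    exact Real.log_le_log (by exact_mod_cast h) (by exact_mod_cast ncard_wordsOfLength_le L n)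

theorem coe_entropy [Finite β] (L : Set (List β)) : (entropy L : EReal) = max 0 (growthRate L) := by
  have hbdd : IsBoundedUnder (· ≤ ·) atTop
      fun n : ℕ => Real.log (wordsOfLength L n).ncard / n :=
    isBoundedUnder_of ⟨_, log_ncard_wordsOfLength_div_le L⟩
  have hnonneg : IsBoundedUnder (· ≥ ·) atTop
      fun n : ℕ => Real.log (wordsOfLength L n).ncard / n :=
    isBoundedUnder_of ⟨0, fun n => div_nonneg (Real.log_natCast_nonneg _) n.cast_nonneg⟩
  calc (entropy L : EReal)
      = limsup (fun n : ℕ => ((Real.log (wordsOfLength L n).ncard / n : ℝ) : EReal)) atTop :=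
        EReal.coe_strictMono.monotone.map_limsup_of_continuousAt _
          continuous_coe_real_ereal.continuousAt hbdd hnonneg.isCoboundedUnder_le
    _ = expGrowthSup (1 ⊔ fun n => ((wordsOfLength L n).ncard : ℝ≥0∞)) := by
        simp only [expGrowthSup, Pi.sup_apply, Pi.one_apply, log_one_sup_natCast, EReal.coe_div,
          EReal.coe_natCast]
    _ = max 0 (growthRate L) := expGrowthSup_one_sup _

theorem growthRate_le_of_forall_ne_nil [Finite β] (h : ∀ w ∈ L, w ≠ [] → w ∈ L') :
    growthRate L ≤ growthRate L' := by
  refine expGrowthSup_eventually_monotone ?_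
  filter_upwards [eventually_ne_atTop 0] with n hn
  refine Nat.cast_le.2 (Set.ncard_le_ncard ?_ (finite_wordsOfLength L' n))
  rintro w ⟨hw, rfl⟩
  exact ⟨h w hw (List.ne_nil_of_length_pos (Nat.pos_of_ne_zero hn)), rfl⟩

theorem growthRate_iUnion_le {ι : Type*} [Finite ι] (L : ι → Set (List β)) :
    growthRate (⋃ i, L i) ≤ ⨆ i, growthRate (L i) := by
  have := Fintype.ofFinite ι
  have hunion (n : ℕ) : wordsOfLength (⋃ i, L i) n = ⋃ i, wordsOfLength (L i) n := by
    ext w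
    simp [wordsOfLength]
  calc growthRate (⋃ i, L i)
      ≤ expGrowthSup (∑ i, fun n => ((wordsOfLength (L i) n).ncard : ℝ≥0∞)) := by
        refine expGrowthSup_monotone fun n => ?_
        rw [Finset.sum_apply, hunion]
        exact_mod_cast Set.ncard_iUnion_le_of_fintype fun i => wordsOfLength (L i) n
    _ = ⨆ i, growthRate (L i) := by simp [expGrowthSup_sum, growthRate]

theorem growthRate_le_of_forall_append_mem [Finite β] (u v : List β)
    (h : ∀ w ∈ L, u ++ w ++ v ∈ L') : growthRate L ≤ growthRate L' := by
  suffices hcard : ∀ n, (wordsOfLength L n).ncard ≤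
      (wordsOfLength L' (n + (u.length + v.length))).ncard from
    (expGrowthSup_monotone fun n => Nat.cast_le.2 (hcard n)).trans
      (expGrowthSup_comp_add_le (fun n => ((wordsOfLength L' n).ncard : ℝ≥0∞)) _)
  intro n
  refine Set.ncard_le_ncard_of_injOn (fun w => u ++ w ++ v) ?_ ?_ (finite_wordsOfLength _ _)
  · rintro w ⟨hw, rfl⟩
    exact ⟨h w hw, by simp only [List.length_append]; omega⟩
  · intro w _ w' _ hww'
    exact List.append_cancel_left (List.append_cancel_right hww')

theorem image_map_wordsOfLength (f : β → γ) (L : Set (List β)) (n : ℕ) :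
    List.map f '' wordsOfLength L n = wordsOfLength (List.map f '' L) n := by
  ext w
  constructor
  · rintro ⟨l, ⟨hl, rfl⟩, rfl⟩
    exact ⟨⟨l, hl, rfl⟩, List.length_map f⟩
  · rintro ⟨⟨l, hl, rfl⟩, rfl⟩
    exact ⟨l, ⟨hl, (List.length_map f).symm⟩, rfl⟩

theorem growthRate_image_map_le [Finite β] (f : β → γ) (L : Set (List β)) :
    growthRate (List.map f '' L) ≤ growthRate L := by
  refine expGrowthSup_monotone fun n => Nat.cast_le.2 ?_
  rw [← image_map_wordsOfLength]
  exact Set.ncard_image_le (finite_wordsOfLength L n)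

theorem growthRate_le_growthRate_image_map [Finite β] (f : β → γ) {K : ℕ → ℕ}
    (hK : expGrowthSup (fun n => (K n : ℝ≥0∞)) ≤ 0)
    (hfiber : ∀ w, {l ∈ L | l.map f = w}.ncard ≤ K w.length) :
    growthRate L ≤ growthRate (List.map f '' L) := by
  refine (expGrowthSup_monotone fun n => ?_).trans (expGrowthSup_mul_le_of_nonpos_left hK)
  rw [Pi.mul_apply, ← image_map_wordsOfLength]
  refine mod_cast ncard_le_mul_ncard_image (finite_wordsOfLength L n) (List.map f) ?_
  rintro _ ⟨l, ⟨-, rfl⟩, rfl⟩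
  have hset : {l' ∈ wordsOfLength L l.length | l'.map f = l.map f} =
      {l' ∈ L | l'.map f = l.map f} := by
    ext l'
    refine ⟨fun h => ⟨h.1.1, h.2⟩, fun h => ⟨⟨h.1, ?_⟩, h.2⟩⟩
    simpa using congrArg List.length h.2
  simpa [hset] using hfiber (l.map f)

end Languages

section Walks

variable {α σ : Type*} {M : NFA α σ}

instance Edge.instFinite [Finite α] [Finite σ] : Finite (Edge M) :=
  inferInstanceAs (Finite {e : σ × α × σ // e.2.2 ∈ M.step e.1 e.2.1})

/-- The source state of an edge. -/
def Edge.source (e : Edge M) : σ := e.1.1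

/-- The letter read along an edge. -/
def Edge.label (e : Edge M) : α := e.1.2.1

/-- The target state of an edge. -/
def Edge.target (e : Edge M) : σ := e.1.2.2

theorem Edge.target_mem_step (e : Edge M) : e.target ∈ M.step e.source e.label := e.2

theorem mem_WLang_iff_isChain {l : List (Edge M)} :
    l ∈ WLang M ↔ l.IsChain fun e f => e.target = f.source := Iff.rfl

/-- `IsWalk p l q`: the sequence of edges `l` is a walk from the state `p` to the state `q`. The
endpoints are explicit so that the empty walk is based at a state. -/
def IsWalk : σ → List (Edge M) → σ → Prop
  | p, [], q => p = q
  | p, e :: l, q => e.source = p ∧ IsWalk e.target l q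

theorem IsWalk.append {p q s : σ} {l₁ l₂ : List (Edge M)} (h₁ : IsWalk p l₁ q)
    (h₂ : IsWalk q l₂ s) : IsWalk p (l₁ ++ l₂) s := by
  induction l₁ generalizing p with
  | nil => exact h₁ ▸ h₂
  | cons e l ih => exact ⟨h₁.1, ih h₁.2⟩

theorem cons_mem_WLang_iff {e : Edge M} {l : List (Edge M)} :
    e :: l ∈ WLang M ↔ ∃ q, IsWalk e.source (e :: l) q := by
  induction l generalizing e with
  | nil => simp [mem_WLang_iff_isChain, IsWalk]
  | cons f l ih =>
    calc e :: f :: l ∈ WLang M ↔ e.target = f.source ∧ f :: l ∈ WLang M := List.isChain_cons_cons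
      _ ↔ ∃ q, IsWalk e.source (e :: f :: l) q := by simp [ih, IsWalk, eq_comm]

theorem mem_WLang_iff_of_ne_nil {l : List (Edge M)} (hl : l ≠ []) :
    l ∈ WLang M ↔ ∃ p q, IsWalk p l q := by
  obtain ⟨e, l, rfl⟩ := List.exists_cons_of_ne_nil hl
  exact cons_mem_WLang_iff.trans
    ⟨fun ⟨q, h⟩ => ⟨_, q, h⟩, fun ⟨_, q, h⟩ => ⟨q, rfl, h.2⟩⟩

/-- The walks of `M` from an initial state to a final state. -/
def acceptingWalks (M : NFA α σ) : Set (List (Edge M)) :=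
  {l | ∃ p ∈ M.start, ∃ q ∈ M.accept, IsWalk p l q}

/-- A run of `M` on `w` between arbitrary states. -/
def IsRun (M : NFA α σ) (w : List α) (r : Fin (w.length + 1) → σ) : Prop :=
  ∀ i : Fin w.length, r i.succ ∈ M.step (r i.castSucc) (w.get i)

namespace IsRun

variable {w : List α} {r : Fin (w.length + 1) → σ}

/-- The `i`-th edge traversed by a run. -/
def edge (h : IsRun M w r) (i : Fin w.length) : Edge M :=
  ⟨(r i.castSucc, w.get i, r i.succ), h i⟩

/-- The sequence of edges traversed by a run. -/
def walk (h : IsRun M w r) : List (Edge M) :=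
  List.ofFn h.edge

theorem map_label_walk (h : IsRun M w r) : h.walk.map Edge.label = w := by
  rw [walk, List.map_ofFn]
  exact List.ofFn_get w

theorem isWalk_walk (h : IsRun M w r) : IsWalk (r 0) h.walk (r (Fin.last _)) := by
  induction w with
  | nil => rfl
  | cons a w ih =>
    have htail : IsRun M w (Fin.tail r) := fun i => h i.succ
    have hwalk : h.walk = h.edge 0 :: htail.walk := List.ofFn_succ
    rw [hwalk]
    exact ⟨rfl, ih htail⟩

theorem exists_isWalk_from_zero (h : IsRun M w r) (i : Fin (w.length + 1)) :
    ∃ l : List (Edge M), IsWalk (r 0) l (r i) := by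
  induction i using Fin.induction with
  | zero => exact ⟨[], rfl⟩
  | succ i ih =>
    obtain ⟨l, hl⟩ := ih
    exact ⟨l ++ [h.edge i], hl.append ⟨rfl, rfl⟩⟩

theorem exists_isWalk_to_last (h : IsRun M w r) (i : Fin (w.length + 1)) :
    ∃ l : List (Edge M), IsWalk (r i) l (r (Fin.last _)) := by
  induction i using Fin.reverseInduction with
  | last => exact ⟨[], rfl⟩
  | cast i ih =>
    obtain ⟨l, hl⟩ := ih
    exact ⟨h.edge i :: l, rfl, hl⟩

end IsRun

theorem IsWalk.exists_isRun {p q : σ} {l : List (Edge M)} (h : IsWalk p l q) :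
    ∃ (r : Fin ((l.map Edge.label).length + 1) → σ) (hr : IsRun M (l.map Edge.label) r),
      r 0 = p ∧ r (Fin.last _) = q ∧ hr.walk = l := by
  induction l generalizing p with
  | nil => exact ⟨fun _ => p, fun i => i.elim0, rfl, h, rfl⟩
  | cons e l ih =>
    obtain ⟨r, hr, hzero, hlast, hwalk⟩ := ih h.2
    have hcons : IsRun M (e.label :: l.map Edge.label) (Fin.cons e.source r) :=
      Fin.cases (by simpa [hzero] using e.target_mem_step) hr
    have hedge : hcons.edge 0 = e := Subtype.ext (congrArg (e.source, e.label, ·) hzero)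
    refine ⟨_, hcons, h.1, hlast, ?_⟩
    calc hcons.walk = hcons.edge 0 :: hr.walk := List.ofFn_succ
      _ = e :: l := by rw [hedge, hwalk]

theorem AccRun.isRun {w : List α} {r : Fin (w.length + 1) → σ} (h : AccRun M w r) : IsRun M w r :=
  h.2.2

theorem range_walk_accRun (M : NFA α σ) (w : List α) :
    Set.range (fun r : {r // AccRun M w r} => r.2.isRun.walk) =
      {l ∈ acceptingWalks M | l.map Edge.label = w} := by
  ext l
  constructor
  · rintro ⟨⟨r, hr⟩, rfl⟩
    exact ⟨⟨_, hr.1, _, hr.2.1, hr.isRun.isWalk_walk⟩, hr.isRun.map_label_walk⟩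
  · rintro ⟨⟨p, hp, q, hq, hl⟩, rfl⟩
    obtain ⟨r, hr, rfl, rfl, hwalk⟩ := hl.exists_isRun
    exact ⟨⟨r, hp, hq, hr⟩, hwalk⟩

theorem image_map_label_acceptingWalks (M : NFA α σ) :
    List.map Edge.label '' acceptingWalks M = NLang M := by
  ext w
  calc w ∈ List.map Edge.label '' acceptingWalks M
      ↔ {l ∈ acceptingWalks M | l.map Edge.label = w}.Nonempty := Iff.rfl
    _ ↔ w ∈ NLang M := by
      rw [← range_walk_accRun, Set.range_nonempty_iff_nonempty, nonempty_subtype]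
      rfl

theorem ncard_acceptingWalks_fiber_le [Finite σ] (w : List α) :
    {l ∈ acceptingWalks M | l.map Edge.label = w}.ncard ≤
      Nat.card {r : Fin (w.length + 1) → σ // AccRun M w r} := by
  rw [← range_walk_accRun]
  exact Finite.card_range_le _

theorem Essential.exists_isWalk_from_start (hess : Essential M) (p : σ) :
    ∃ s ∈ M.start, ∃ l : List (Edge M), IsWalk s l p := by
  obtain ⟨w, r, hr, i, rfl⟩ := hess p
  exact ⟨_, hr.1, hr.isRun.exists_isWalk_from_zero i⟩

theorem Essential.exists_isWalk_to_accept (hess : Essential M) (q : σ) :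
    ∃ t ∈ M.accept, ∃ l : List (Edge M), IsWalk q l t := by
  obtain ⟨w, r, hr, i, rfl⟩ := hess q
  exact ⟨_, hr.2.1, hr.isRun.exists_isWalk_to_last i⟩

end Walks

section Growth

variable {α σ : Type*} {M : NFA α σ}

/-- The number of accepting runs of a word grows subexponentially in its length. The bound `K` may
vanish eventually, in which case its growth is `⊥`; hence `≤ 0` instead of `= 0`. -/
def SubexponentialAmbiguity (M : NFA α σ) : Prop :=
  ∃ K : ℕ → ℕ, expGrowthSup (fun n => (K n : ℝ≥0∞)) ≤ 0 ∧
    ∀ w : List α, Nat.card {r : Fin (w.length + 1) → σ // AccRun M w r} ≤ K w.length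

theorem BoundedAmbiguity.subexponentialAmbiguity (h : BoundedAmbiguity M) :
    SubexponentialAmbiguity M := by
  obtain ⟨K, hK⟩ := h
  refine ⟨fun _ => K, ?_, hK⟩
  calc expGrowthSup (fun _ => (K : ℝ≥0∞)) ≤ expGrowthSup fun _ => 1 :=
        expGrowthSup_le_of_eventually_le (ENNReal.natCast_ne_top K) (by simp)
    _ = 0 := expGrowthSup_const one_ne_zero ENNReal.one_ne_top

theorem Essential.growthRate_isWalk_le [Finite (Edge M)] (hess : Essential M) (p q : σ) :
    growthRate {l : List (Edge M) | IsWalk p l q} ≤ growthRate (acceptingWalks M) := by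
  obtain ⟨s, hs, u, hu⟩ := hess.exists_isWalk_from_start p
  obtain ⟨t, ht, v, hv⟩ := hess.exists_isWalk_to_accept q
  exact growthRate_le_of_forall_append_mem u v fun l hl => ⟨s, hs, t, ht, (hu.append hl).append hv⟩

theorem Essential.growthRate_acceptingWalks [Finite σ] [Finite (Edge M)] (hess : Essential M) :
    growthRate (acceptingWalks M) = growthRate (WLang M) := by
  apply le_antisymm
  · exact growthRate_le_of_forall_ne_nil fun l ⟨p, _, q, _, hl⟩ hne =>
      (mem_WLang_iff_of_ne_nil hne).2 ⟨p, q, hl⟩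
  · calc growthRate (WLang M)
        ≤ growthRate (⋃ i : σ × σ, {l : List (Edge M) | IsWalk i.1 l i.2}) :=
          growthRate_le_of_forall_ne_nil fun l hl hne => by
            obtain ⟨p, q, h⟩ := (mem_WLang_iff_of_ne_nil hne).1 hl
            exact Set.mem_iUnion.2 ⟨(p, q), h⟩
      _ ≤ ⨆ i : σ × σ, growthRate {l : List (Edge M) | IsWalk i.1 l i.2} := growthRate_iUnion_le _
      _ ≤ growthRate (acceptingWalks M) := iSup_le fun i => hess.growthRate_isWalk_le i.1 i.2

theorem SubexponentialAmbiguity.growthRate_NLang [Finite σ] [Finite (Edge M)]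
    (hamb : SubexponentialAmbiguity M) : growthRate (NLang M) = growthRate (acceptingWalks M) := by
  obtain ⟨K, hK, hruns⟩ := hamb
  rw [← image_map_label_acceptingWalks]
  exact (growthRate_image_map_le _ _).antisymm <|
    growthRate_le_growthRate_image_map _ hK fun w =>
      (ncard_acceptingWalks_fiber_le w).trans (hruns w)

end Growth

theorem entropy_eq_entropy_walks_general {α σ : Type*} [Finite α] [Finite σ] (M : NFA α σ)
    (hess : Essential M) (hamb : SubexponentialAmbiguity M) :
    entropy (NLang M) = entropy (WLang M) := by
  apply EReal.coe_injective
  rw [coe_entropy, coe_entropy, hamb.growthRate_NLang, hess.growthRate_acceptingWalks]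

/-- If a finite NFA `M` is essential and has bounded ambiguity, then the entropy of
its language equals the entropy of the walk language of its transition graph. -/
theorem entropy_eq_entropy_walks {α σ : Type*} [Fintype α] [Fintype σ] (M : NFA α σ)
    (hess : Essential M) (hamb : BoundedAmbiguity M) :
    entropy (NLang M) = entropy (WLang M) :=
  entropy_eq_entropy_walks_general M hess hamb.subexponentialAmbiguity
end

section
/- Let m ≥ 1 and let H and K be finitely generated subgroups of the free group F_m. Then the intersection H ∩ K is finitely generated (Howson's theorem). -/
/-!
Let a free group act on a set `V`. Reading words turns `V` into a graph labelled by the letters,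
in which the stabilizer of a vertex `v` consists of the closed paths at `v`. Following Stallings,
the core at `v` is the set of edges lying on reduced closed paths at `v`, and the stabilizer of `v`
is finitely generated if and only if this core is finite: free reduction only removes edges from a
path, so the edges used by a finite generating set already cover the core; conversely, Schreier's
generators indexed by the edges of the core generate the stabilizer.

Now `H` and `K` are the stabilizers of the base points of the coset spaces of `H` and `K`, so
`H ⊓ K` is the stabilizer of the pair of base points in the product of these spaces. The core at
that pair embeds in the product of the two cores, hence is finite.
-/

open FreeGroup MulAction

theorem exists_orbit_section {G X : Type*} [Group G] [MulAction G X] (v : X) :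
    ∃ c : X → G, c v = 1 ∧ ∀ u ∈ orbit G v, c u • v = u := by
  classical
  choose! c hc using fun (u : X) (hu : u ∈ orbit G v) => mem_orbit_iff.1 hu
  refine ⟨Function.update c v 1, Function.update_self .., fun u hu => ?_⟩
  obtain rfl | huv := eq_or_ne u v
  · rw [Function.update_self, one_smul]
  · rw [Function.update_of_ne huv, hc u hu]

theorem stabilizer_prodMk {G X Y : Type*} [Group G] [MulAction G X] [MulAction G Y] (x : X)
    (y : Y) : stabilizer G (x, y) = stabilizer G x ⊓ stabilizer G y :=
  Subgroup.ext fun _ => Prod.mk_inj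

theorem mk_cons {α : Type*} (x : α × Bool) (w : List (α × Bool)) :
    mk (x :: w) = mk [x] * mk w :=
  (mul_mk (L₁ := [x])).symm

section FreeGroupAction

variable {α V W : Type*} [MulAction (FreeGroup α) V] [MulAction (FreeGroup α) W]

/-- The edges traversed when a word is read from the vertex `v` in the labelled graph of a free
group action. The edge `(u, x)` leads from `u` to `mk [x] • u`; as the action is on the left, a word
is read from its last letter to its first. -/
def edgesAlong (v : V) : List (α × Bool) → Set (V × α × Bool)
  | [] => ∅
  | x :: w => insert (mk w • v, x) (edgesAlong v w)

/-- The edge `e` traversed in the opposite direction. -/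
def reverseEdge (e : V × α × Bool) : V × α × Bool :=
  (mk [e.2] • e.1, e.2.1, !e.2.2)

/-- The edges of Stallings' core graph at `v`: those lying on a reduced closed path at `v`, in the
direction in which the path traverses them. -/
def coreEdges (v : V) : Set (V × α × Bool) :=
  {e | ∃ w, IsReduced w ∧ mk w ∈ stabilizer (FreeGroup α) v ∧ e ∈ edgesAlong v w}

theorem finite_edgesAlong (v : V) (w : List (α × Bool)) : (edgesAlong v w).Finite := by
  induction w with
  | nil => exact Set.finite_empty
  | cons x w ih => exact ih.insert _

theorem edgesAlong_singleton (v : V) (x : α × Bool) : edgesAlong v [x] = {(v, x)} := by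
  rw [edgesAlong, edgesAlong, ← one_eq_mk, one_smul, insert_empty_eq]

theorem edgesAlong_append (v : V) (w₁ w₂ : List (α × Bool)) :
    edgesAlong v (w₁ ++ w₂) = edgesAlong (mk w₂ • v) w₁ ∪ edgesAlong v w₂ := by
  induction w₁ with
  | nil => simp only [List.nil_append, edgesAlong, Set.empty_union]
  | cons x w₁ ih =>
    simp only [List.cons_append, edgesAlong, ih, ← mul_mk, mul_smul, Set.insert_union]

theorem edgesAlong_subset_of_red (v : V) {w₁ w₂ : List (α × Bool)} (h : Red w₁ w₂) :
    edgesAlong v w₂ ⊆ edgesAlong v w₁ := by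
  induction h with
  | refl => exact subset_rfl
  | tail _ step ih =>
    refine Set.Subset.trans ?_ ih
    obtain @⟨l, r, a, b⟩ := step
    have cancel : mk ((a, b) :: (a, !b) :: r) = mk r := Quot.sound (Red.Step.not (L₁ := []))
    rw [edgesAlong_append, edgesAlong_append, cancel]
    exact Set.union_subset_union_right _
      ((Set.subset_insert _ _).trans (Set.subset_insert _ _))

theorem reverseEdge_involutive : Function.Involutive (reverseEdge : V × α × Bool → V × α × Bool) :=
  fun ⟨u, a, b⟩ => by
    have cancel : mk [(a, !b)] = (mk [(a, b)])⁻¹ := rfl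
    simp only [reverseEdge, cancel, inv_smul_smul, Bool.not_not]

theorem edgesAlong_invRev (v : V) (w : List (α × Bool)) :
    edgesAlong (mk w • v) (invRev w) = reverseEdge '' edgesAlong v w := by
  induction w with
  | nil => simp only [invRev_empty, edgesAlong, Set.image_empty]
  | cons x w ih =>
    have back : mk (invRev [x]) • mk (x :: w) • v = mk w • v := by
      rw [← inv_mk, mk_cons x w, mul_smul, inv_smul_smul]
    have last : edgesAlong (mk (x :: w) • v) (invRev [x]) = {reverseEdge (mk w • v, x)} := by
      rw [mk_cons x w, mul_smul]
      exact edgesAlong_singleton _ _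
    rw [invRev_cons, edgesAlong_append, back, ih, last, edgesAlong, Set.image_insert_eq,
      Set.union_singleton]

/-- The elements of the free group represented by a closed path at `v` all of whose edges belong
to `E` up to orientation. -/
def loopSubgroup (v : V) (E : Set (V × α × Bool)) : Subgroup (FreeGroup α) where
  carrier := {g | g ∈ stabilizer (FreeGroup α) v ∧
    ∃ w, mk w = g ∧ edgesAlong v w ⊆ E ∪ reverseEdge ⁻¹' E}
  one_mem' := ⟨one_mem _, [], rfl, Set.empty_subset _⟩
  mul_mem' := by
    rintro _ _ ⟨h₁, w₁, rfl, hw₁⟩ ⟨h₂, w₂, rfl, hw₂⟩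
    refine ⟨mul_mem h₁ h₂, w₁ ++ w₂, mul_mk.symm, ?_⟩
    rw [edgesAlong_append, h₂]
    exact Set.union_subset hw₁ hw₂
  inv_mem' := by
    rintro _ ⟨h, w, rfl, hw⟩
    refine ⟨inv_mem h, invRev w, inv_mk.symm, ?_⟩
    have reversed := edgesAlong_invRev v w
    rw [h] at reversed
    rw [reversed, Set.image_subset_iff, Set.preimage_union, ← Set.preimage_comp,
      reverseEdge_involutive.comp_self, Set.preimage_id, Set.union_comm]
    exact hw

theorem coreEdges_subset_of_stabilizer_le_loopSubgroup {v : V} {E : Set (V × α × Bool)}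
    (h : stabilizer (FreeGroup α) v ≤ loopSubgroup v E) :
    coreEdges v ⊆ E ∪ reverseEdge ⁻¹' E := by
  rintro e ⟨w, hw, hwv, he⟩
  obtain ⟨-, w', hww', hE⟩ := h hwv
  obtain ⟨r, hw'r, hwr⟩ := Red.exact.1 hww'
  obtain rfl : r = w := hw.red_iff_eq.1 hwr
  exact hE (edgesAlong_subset_of_red v hw'r he)

theorem finite_coreEdges_of_fg_stabilizer {v : V} (h : (stabilizer (FreeGroup α) v).FG) :
    (coreEdges v : Set (V × α × Bool)).Finite := by
  classical
  obtain ⟨S, hS⟩ := h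
  set E : Set (V × α × Bool) := ⋃ g ∈ S, edgesAlong v g.toWord
  have hE : E.Finite := S.finite_toSet.biUnion fun g _ => finite_edgesAlong v _
  have le_loop : stabilizer (FreeGroup α) v ≤ loopSubgroup v E := by
    conv_lhs => rw [← hS]
    refine (Subgroup.closure_le _).2 fun g hg =>
      ⟨hS.le (Subgroup.subset_closure hg), g.toWord, mk_toWord, ?_⟩
    exact Set.subset_union_of_subset_left
      (Set.subset_biUnion_of_mem (u := fun g => edgesAlong v g.toWord) hg) _
  exact (hE.union (hE.preimage reverseEdge_involutive.injective.injOn)).subset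
    (coreEdges_subset_of_stabilizer_le_loopSubgroup le_loop)

/-- Schreier's generator at the edge `e`, where `c u` is the label of a chosen path from the base
point to `u`: follow the path to the source of `e`, then `e`, then the path back from its target. -/
def schreierGenerator (c : V → FreeGroup α) (e : V × α × Bool) : FreeGroup α :=
  (c (mk [e.2] • e.1))⁻¹ * mk [e.2] * c e.1

theorem inv_mul_mk_mul_mem_closure (c : V → FreeGroup α) (v : V) (w : List (α × Bool)) :
    (c (mk w • v))⁻¹ * mk w * c v ∈
      Subgroup.closure (schreierGenerator c '' edgesAlong v w) := by
  induction w with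
  | nil =>
    rw [← one_eq_mk, one_smul, mul_one, inv_mul_cancel]
    exact one_mem _
  | cons x w ih =>
    have factor : (c (mk (x :: w) • v))⁻¹ * mk (x :: w) * c v =
        schreierGenerator c (mk w • v, x) * ((c (mk w • v))⁻¹ * mk w * c v) := by
      simp only [schreierGenerator, mk_cons x w, mul_smul]
      group
    rw [factor]
    exact mul_mem (Subgroup.subset_closure (Set.mem_image_of_mem _ (Set.mem_insert _ _)))
      (Subgroup.closure_mono (Set.image_mono (Set.subset_insert _ _)) ih)

theorem source_mem_orbit_of_mem_edgesAlong {v : V} {w : List (α × Bool)} {e : V × α × Bool}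
    (he : e ∈ edgesAlong v w) : e.1 ∈ orbit (FreeGroup α) v := by
  induction w with
  | nil => exact he.elim
  | cons x w ih =>
    rcases he with rfl | he
    · exact mem_orbit v (mk w)
    · exact ih he

theorem schreierGenerator_mem_stabilizer {c : V → FreeGroup α} {v : V}
    (hc : ∀ u ∈ orbit (FreeGroup α) v, c u • v = u) {e : V × α × Bool}
    (he : e.1 ∈ orbit (FreeGroup α) v) :
    schreierGenerator c e ∈ stabilizer (FreeGroup α) v := by
  have target := hc (mk [e.2] • e.1) (mem_orbit_of_mem_orbit _ he)
  rw [mem_stabilizer_iff, schreierGenerator, mul_smul, mul_smul, hc _ he, inv_smul_eq_iff, target]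

theorem closure_schreierGenerator_coreEdges {c : V → FreeGroup α} {v : V} (hcv : c v = 1)
    (hc : ∀ u ∈ orbit (FreeGroup α) v, c u • v = u) :
    Subgroup.closure (schreierGenerator c '' coreEdges v) = stabilizer (FreeGroup α) v := by
  classical
  refine le_antisymm ((Subgroup.closure_le _).2 ?_) fun g hg => ?_
  · rintro _ ⟨e, ⟨w, -, -, he⟩, rfl⟩
    exact schreierGenerator_mem_stabilizer hc (source_mem_orbit_of_mem_edgesAlong he)
  · have edges_subset : edgesAlong v g.toWord ⊆ coreEdges v := fun e he =>
      ⟨g.toWord, isReduced_toWord, by rwa [mk_toWord], he⟩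
    have g_mem := inv_mul_mk_mul_mem_closure c v g.toWord
    rw [mk_toWord, mem_stabilizer_iff.1 hg, hcv, inv_one, one_mul, mul_one] at g_mem
    exact Subgroup.closure_mono (Set.image_mono edges_subset) g_mem

theorem fg_stabilizer_iff_finite_coreEdges {v : V} :
    (stabilizer (FreeGroup α) v).FG ↔ (coreEdges v : Set (V × α × Bool)).Finite := by
  refine ⟨finite_coreEdges_of_fg_stabilizer, fun h => (Subgroup.fg_iff _).2 ?_⟩
  obtain ⟨c, hcv, hc⟩ := exists_orbit_section (G := FreeGroup α) v
  exact ⟨_, closure_schreierGenerator_coreEdges hcv hc, h.image _⟩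

theorem edgesAlong_prodMk_subset (v : V) (v' : W) (w : List (α × Bool)) :
    edgesAlong (v, v') w ⊆
      {e | (e.1.1, e.2) ∈ edgesAlong v w ∧ (e.1.2, e.2) ∈ edgesAlong v' w} := by
  induction w with
  | nil => exact Set.empty_subset _
  | cons x w ih =>
    refine Set.insert_subset ⟨Set.mem_insert _ _, Set.mem_insert _ _⟩ (ih.trans ?_)
    exact fun e he => ⟨Set.mem_insert_of_mem _ he.1, Set.mem_insert_of_mem _ he.2⟩

theorem coreEdges_prodMk_subset (v : V) (v' : W) :
    (coreEdges (v, v') : Set ((V × W) × α × Bool)) ⊆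
      {e | (e.1.1, e.2) ∈ coreEdges v ∧ (e.1.2, e.2) ∈ coreEdges v'} := by
  rintro e ⟨w, hw, hwv, he⟩
  rw [stabilizer_prodMk] at hwv
  obtain ⟨hev, hev'⟩ := edgesAlong_prodMk_subset v v' w he
  exact ⟨⟨w, hw, hwv.1, hev⟩, ⟨w, hw, hwv.2, hev'⟩⟩

theorem finite_coreEdges_prodMk {v : V} {v' : W}
    (h : (coreEdges v : Set (V × α × Bool)).Finite)
    (h' : (coreEdges v' : Set (W × α × Bool)).Finite) :
    (coreEdges (v, v') : Set ((V × W) × α × Bool)).Finite := by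
  let proj (e : (V × W) × α × Bool) : (V × α × Bool) × (W × α × Bool) :=
    ((e.1.1, e.2), (e.1.2, e.2))
  have proj_injective : Function.Injective proj := by
    rintro ⟨⟨u, u'⟩, x⟩ ⟨⟨_, _⟩, _⟩ h
    cases h
    rfl
  exact ((h.prod h').preimage proj_injective.injOn).subset (coreEdges_prodMk_subset v v')

end FreeGroupAction

theorem howson_general {α : Type*} (H K : Subgroup (FreeGroup α)) (hH : H.FG) (hK : K.FG) :
    (H ⊓ K).FG := by
  rw [← stabilizer_quotient H, fg_stabilizer_iff_finite_coreEdges] at hH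
  rw [← stabilizer_quotient K, fg_stabilizer_iff_finite_coreEdges] at hK
  rw [← stabilizer_quotient H, ← stabilizer_quotient K, ← stabilizer_prodMk,
    fg_stabilizer_iff_finite_coreEdges]
  exact finite_coreEdges_prodMk hH hK

/-- Howson's theorem: the intersection of two finitely generated subgroups of a free
group of finite rank `m ≥ 1` is finitely generated. -/
theorem howson (m : ℕ) (hm : 1 ≤ m) (H K : Subgroup (FreeGroup (Fin m)))
    (hH : H.FG) (hK : K.FG) : (H ⊓ K).FG :=
  howson_general H K hH hK
end
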